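/- For every odd integer n ≥ 3, the minimum cardinality of an odd cover of the cycle C_n on n vertices is (n + 1)/2; that is, b₂(C_n) = (n+1)/2. -/

import Mathlib

/-!
Lower bound: let `xᵢ, yᵢ` be the indicator vectors over `𝔽₂` of the parts of the `k` bicliques of
an odd cover of `C_n`, so that the adjacency matrix is `A = ∑ᵢ (xᵢ yᵢᵀ + yᵢ xᵢᵀ)`
(`IsOddCover.adj_eq_sum`). If `2k < n`, some nonzero vector is orthogonal to every `xᵢ` and `yᵢ`,
hence lies in the kernel of `A`. For odd `n` that kernel is spanned by the all-ones vector
(`kernel_cycle`), so all parts have even size. The number of edges of `C_n` is congruent to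
`∑ᵢ |Xᵢ| |Yᵢ|` modulo `2`, so it is even, whereas it equals the odd number `n`. Hence `2k ≥ n`
(`lower`), which for odd `n` means `k ≥ (n + 1) / 2`.

Upper bound: stars centred at the `(n + 1) / 2` vertices `0, 2, …, n - 1` partition the edge set
(`upper`).
-/

open scoped Classical

/-- A list of bicliques `B 0, …, B (k-1)` (each given by a pair of disjoint
vertex subsets) is an *odd cover* of `G` if two distinct vertices are adjacent
in `G` exactly when they lie in opposite parts of an odd number of the bicliques. -/
def IsOddCover {V : Type*} [Fintype V] (G : SimpleGraph V) {k : ℕ}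
    (B : Fin k → Finset V × Finset V) : Prop :=
  (∀ i, Disjoint (B i).1 (B i).2) ∧
  ∀ u v : V, u ≠ v →
    (G.Adj u v ↔ Odd (Finset.univ.filter (fun i : Fin k =>
      (u ∈ (B i).1 ∧ v ∈ (B i).2) ∨ (u ∈ (B i).2 ∧ v ∈ (B i).1))).card)

/-- `b2 G` is the minimum cardinality of an odd cover of `G`. -/
noncomputable def b2 {V : Type*} [Fintype V] (G : SimpleGraph V) : ℕ :=
  sInf {k : ℕ | ∃ B : Fin k → Finset V × Finset V, IsOddCover G B}

/-- `r2 G` is the rank of the adjacency matrix of `G` over `𝔽₂`. -/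
noncomputable def r2 {V : Type*} [Fintype V] (G : SimpleGraph V) : ℕ :=
  (Matrix.of fun u v : V => if G.Adj u v then (1 : ZMod 2) else 0).rank


/-- The cycle graph on `n` vertices `0,1,…,n-1`, with `i` adjacent to `j`
iff `i - j ≡ ±1 (mod n)`. -/
def cycleGraph (n : ℕ) : SimpleGraph (Fin n) :=
  SimpleGraph.fromRel (fun i j => (i.val + 1) % n = j.val)

/-- Successor modulo `n` on `Fin n`, unfolded into a form linear arithmetic can use. -/
lemma succ_mod_eq {n : ℕ} (a b : Fin n) : (a.val + 1) % n = b.val ↔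
    (a.val + 1 = b.val ∨ (a.val + 1 = n ∧ b.val = 0)) := by
  have ha := a.isLt
  have hb := b.isLt
  rcases Nat.lt_or_ge (a.val + 1) n with h | h
  · rw [Nat.mod_eq_of_lt h]; omega
  · have : a.val + 1 = n := by omega
    rw [this, Nat.mod_self]; omega

/-- Encoding of a vertex set by its indicator vector over `𝔽₂`. -/
noncomputable def ind {V : Type*} (S : Finset V) (u : V) : ZMod 2 := if u ∈ S then 1 else 0

/-- Matrix of the cyclic shift on `Fin n` over `𝔽₂`; the adjacency matrix of `C_n` is
`shift n + (shift n)ᵀ`. -/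
def shift (n : ℕ) (u v : Fin n) : ZMod 2 := if (u.val + 1) % n = v.val then 1 else 0

/-- The adjacency matrix over `𝔽₂` of a graph with an odd cover is `∑ᵢ (xᵢ yᵢᵀ + yᵢ xᵢᵀ)`. The
diagonal entries agree as well, because the parts of each biclique are disjoint. -/
lemma IsOddCover.adj_eq_sum {V : Type*} [Fintype V] {G : SimpleGraph V} {k : ℕ}
    {B : Fin k → Finset V × Finset V} (h : IsOddCover G B) (u v : V) :
    (if G.Adj u v then (1 : ZMod 2) else 0) =
      ∑ i, (ind (B i).1 u * ind (B i).2 v + ind (B i).2 u * ind (B i).1 v) := by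
  have hd : ∀ i w, w ∈ (B i).1 → w ∉ (B i).2 := fun i w hw => Finset.disjoint_left.1 (h.1 i) hw
  by_cases huv : u = v
  · subst huv
    rw [if_neg (G.loopless.irrefl u)]
    refine (Finset.sum_eq_zero fun i _ => ?_).symm
    have := hd i u
    unfold ind
    split_ifs <;> simp_all
  · have hc : ∑ i, (ind (B i).1 u * ind (B i).2 v + ind (B i).2 u * ind (B i).1 v) =
        ((Finset.univ.filter (fun i : Fin k =>
          (u ∈ (B i).1 ∧ v ∈ (B i).2) ∨ (u ∈ (B i).2 ∧ v ∈ (B i).1))).card : ZMod 2) := by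
      rw [Finset.card_filter, Nat.cast_sum]
      refine Finset.sum_congr rfl fun i _ => ?_
      have h1 := hd i u
      have h2 := hd i v
      unfold ind
      split_ifs <;> simp_all
    rw [hc]
    split_ifs with ha
    · exact ((ZMod.natCast_eq_one_iff_odd).2 ((h.2 u v huv).1 ha)).symm
    · refine ((ZMod.natCast_eq_zero_iff_even).2 ?_).symm
      rw [← Nat.not_odd_iff_even]
      exact fun ho => ha ((h.2 u v huv).2 ho)

/-- For `n ≥ 3` the two shifts have disjoint supports, so their sum is the `0/1` adjacency
matrix even modulo `2`. -/
lemma adj_cycleGraph {n : ℕ} (hn : 3 ≤ n) (u v : Fin n) :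
    (if (cycleGraph n).Adj u v then (1 : ZMod 2) else 0) = shift n u v + shift n v u := by
  have hu := u.isLt
  have hv := v.isLt
  simp only [shift, cycleGraph, SimpleGraph.fromRel_adj, succ_mod_eq, ne_eq, Fin.ext_iff]
  split_ifs <;> first | rfl | (exfalso; omega)

/-- A symmetrization `f + fᵀ` determines the sum of the entries of `f`, if `f` has zero diagonal:
it is the sum over the part above the diagonal. -/
lemma sum_upper {n : ℕ} (f : Fin n → Fin n → ZMod 2) (hf : ∀ u, f u u = 0) :
    ∑ u, ∑ v, (if u < v then f u v + f v u else 0) = ∑ u, ∑ v, f u v := by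
  have h1 : ∀ u v, (if u < v then f u v + f v u else 0) =
      (if u < v then f u v else 0) + (if u < v then f v u else 0) := by
    intro u v; split_ifs <;> simp
  simp only [h1, Finset.sum_add_distrib]
  rw [Finset.sum_comm (f := fun u v => if u < v then f v u else 0)]
  simp only [← Finset.sum_add_distrib]
  refine Finset.sum_congr rfl fun u _ => Finset.sum_congr rfl fun v _ => ?_
  rcases lt_trichotomy u v with h | h | h
  · simp [h, h.not_gt]
  · subst h; simp [hf]
  · simp [h, h.not_gt]

/-- For odd `n`, a nonzero vector in the kernel of the adjacency matrix of `C_n` over `𝔽₂` is the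
all-ones vector: kernel vectors are invariant under rotation by `2`, which generates all
rotations. -/
lemma kernel_cycle {n : ℕ} (hn : 3 ≤ n) (hodd : Odd n) (x : Fin n → ZMod 2) (hx : x ≠ 0)
    (hker : ∀ u, ∑ w, (shift n u w + shift n w u) * x w = 0) (u : Fin n) : x u = 1 := by
  have hpos : 0 < n := by omega
  set g : ℕ → ZMod 2 := fun m => x ⟨m % n, Nat.mod_lt _ hpos⟩ with hg
  have hper : ∀ m, g (m + n) = g m := fun m => by simp [hg]
  have hstep : ∀ m, g (m + 2) = g m := by
    intro m
    have h := hker ⟨(m + 1) % n, Nat.mod_lt _ hpos⟩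
    have e1 : ∀ w : Fin n, shift n ⟨(m + 1) % n, Nat.mod_lt _ hpos⟩ w =
        if w = ⟨(m + 2) % n, Nat.mod_lt _ hpos⟩ then 1 else 0 := by
      intro w
      simp only [shift, Fin.ext_iff, Nat.mod_add_mod, eq_comm (a := w.val)]
    have e2 : ∀ w : Fin n, shift n w ⟨(m + 1) % n, Nat.mod_lt _ hpos⟩ =
        if w = ⟨m % n, Nat.mod_lt _ hpos⟩ then 1 else 0 := by
      intro w
      simp only [shift, Fin.ext_iff]
      have : (w.val + 1) % n = (m + 1) % n ↔ w.val = m % n := by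
        constructor
        · intro h
          have h' : w.val % n = m % n := Nat.ModEq.add_right_cancel' 1 h
          rwa [Nat.mod_eq_of_lt w.isLt] at h'
        · intro h
          rw [h, Nat.mod_add_mod]
      simp only [this]
    simp only [add_mul, Finset.sum_add_distrib, e1, e2, ite_mul, one_mul, zero_mul,
      Finset.sum_ite_eq', Finset.mem_univ, if_true] at h
    exact CharTwo.add_eq_zero.1 h
  have heven : ∀ m, g (2 * m) = g 0 := by
    intro m
    induction m with
    | zero => rfl
    | succ m ih => rw [← ih]; exact hstep (2 * m)
  have hall : ∀ m, g m = g 0 := by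
    intro m
    rcases Nat.even_or_odd' m with ⟨c, rfl | rfl⟩
    · exact heven c
    · obtain ⟨d, hd⟩ := hodd
      rw [← hper, show 2 * c + 1 + n = 2 * (c + d + 1) by omega]
      exact heven _
  have hxg : ∀ w : Fin n, x w = g 0 := by
    intro w
    rw [← hall w.val]
    simp [hg, Nat.mod_eq_of_lt w.isLt]
  have h01 : ∀ a : ZMod 2, a = 0 ∨ a = 1 := by decide
  rcases h01 (g 0) with h | h
  · exact absurd (funext fun w => (hxg w).trans h) hx
  · exact (hxg u).trans h

/-- Fewer than `n / 2` bicliques cannot suffice: the all-ones vector would be orthogonal to the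
indicators of all parts, and then the number of edges, `n`, would be even. -/
lemma lower {n : ℕ} (hn : 3 ≤ n) (hodd : Odd n) {k : ℕ}
    {B : Fin k → Finset (Fin n) × Finset (Fin n)}
    (h : IsOddCover (cycleGraph n) B) : n ≤ 2 * k := by
  by_contra hk
  have hA : ∀ u v, shift n u v + shift n v u =
      ∑ i, (ind (B i).1 u * ind (B i).2 v + ind (B i).2 u * ind (B i).1 v) :=
    fun u v => (adj_cycleGraph hn u v).symm.trans (h.adj_eq_sum u v)
  -- `2 * k` linear conditions in dimension `n > 2 * k` have a common nonzero solution.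
  let M : Matrix (Fin k ⊕ Fin k) (Fin n) (ZMod 2) :=
    Matrix.of fun i u => Sum.elim (fun i => ind (B i).1 u) (fun i => ind (B i).2 u) i
  have hbot : LinearMap.ker M.mulVecLin ≠ ⊥ :=
    LinearMap.ker_ne_bot_of_finrank_lt (by simp; omega)
  obtain ⟨x, hx, hx0⟩ := Submodule.exists_mem_ne_zero_of_ne_bot hbot
  rw [LinearMap.mem_ker, Matrix.mulVecLin_apply] at hx
  have hX : ∀ i, ∑ w, ind (B i).1 w * x w = 0 := fun i => congrFun hx (Sum.inl i)
  have hY : ∀ i, ∑ w, ind (B i).2 w * x w = 0 := fun i => congrFun hx (Sum.inr i)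
  have hone : ∀ u, x u = 1 := by
    refine kernel_cycle hn hodd x hx0 fun u => ?_
    simp only [hA, Finset.sum_mul]
    rw [Finset.sum_comm]
    refine Finset.sum_eq_zero fun i _ => ?_
    simp only [add_mul, Finset.sum_add_distrib, mul_assoc, ← Finset.mul_sum, hX, hY, mul_zero,
      add_zero]
  simp only [hone, mul_one] at hX
  have hdiag : ∀ u, shift n u u = 0 := by
    intro u
    refine if_neg fun he => ?_
    rw [succ_mod_eq] at he
    omega
  have hL : ∑ u, ∑ v, shift n u v = (n : ZMod 2) := by
    have : ∀ u : Fin n, ∑ v, shift n u v = 1 := by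
      intro u
      rw [Finset.sum_eq_single ⟨(u.val + 1) % n, Nat.mod_lt _ (by omega)⟩]
      · simp [shift]
      · intro b _ hb
        exact if_neg fun he => hb (Fin.ext he.symm)
      · simp
    simp [this]
  -- Each edge is counted once on the left; each pair in opposite parts of a biclique, once on the
  -- right. Above the diagonal the two symmetrizations agree by `hA`.
  have hR : ∑ u, ∑ v, shift n u v =
      ∑ u, ∑ v, ∑ i, ind (B i).1 u * ind (B i).2 v := by
    rw [← sum_upper (shift n) hdiag,
      ← sum_upper (fun u v => ∑ i, ind (B i).1 u * ind (B i).2 v)]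
    · refine Finset.sum_congr rfl fun u _ => Finset.sum_congr rfl fun v _ => ?_
      rw [hA, ← Finset.sum_add_distrib]
      simp only [mul_comm]
    · intro u
      refine Finset.sum_eq_zero fun i _ => ?_
      have hu : u ∈ (B i).1 → u ∉ (B i).2 := fun hu => Finset.disjoint_left.1 (h.1 i) hu
      unfold ind
      split_ifs <;> simp_all
  have hzero : ∑ u, ∑ v, ∑ i, ind (B i).1 u * ind (B i).2 v = 0 := by
    rw [Finset.sum_comm]
    refine Finset.sum_eq_zero fun v _ => ?_
    rw [Finset.sum_comm]
    exact Finset.sum_eq_zero fun i _ => by rw [← Finset.sum_mul, hX, zero_mul]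
  have : (n : ZMod 2) = 0 := hL.symm.trans (hR.trans hzero)
  rw [(ZMod.natCast_eq_one_iff_odd).2 hodd] at this
  exact one_ne_zero this

/-- The stars centred at the vertices `0, 2, …, n - 1` partition the edges of `C_n`, once the edge
between `0` and `n - 1` is assigned to the star at `n - 1` only. -/
lemma upper {n : ℕ} (hn : 3 ≤ n) (hodd : Odd n) :
    ∃ B : Fin ((n + 1) / 2) → Finset (Fin n) × Finset (Fin n), IsOddCover (cycleGraph n) B := by
  refine ⟨fun j => (Finset.univ.filter fun u => u.val = 2 * j.val,
    Finset.univ.filter fun v => v.val = 2 * j.val + 1 ∨ v.val + 1 = 2 * j.val ∨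
      (2 * j.val + 1 = n ∧ v.val = 0)), ?_, ?_⟩
  · intro j
    rw [Finset.disjoint_left]
    intro u
    simp only [Finset.mem_filter, Finset.mem_univ, true_and]
    omega
  · intro u v huv
    obtain ⟨d, hd⟩ := hodd
    have hu := u.isLt
    have hv := v.isLt
    have huv' : u.val ≠ v.val := fun h => huv (Fin.ext h)
    simp only [Finset.mem_filter, Finset.mem_univ, true_and]
    constructor
    · intro ha
      simp only [cycleGraph, SimpleGraph.fromRel_adj, succ_mod_eq] at ha
      have hj : ∃ j : Fin ((n + 1) / 2), ∀ i : Fin ((n + 1) / 2),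
          ((u.val = 2 * i.val ∧ (v.val = 2 * i.val + 1 ∨ v.val + 1 = 2 * i.val ∨
            (2 * i.val + 1 = n ∧ v.val = 0))) ∨
          ((u.val = 2 * i.val + 1 ∨ u.val + 1 = 2 * i.val ∨
            (2 * i.val + 1 = n ∧ u.val = 0)) ∧ v.val = 2 * i.val)) ↔ i = j := by
        have hj : ∃ j < (n + 1) / 2, ∀ i < (n + 1) / 2,
            ((u.val = 2 * i ∧ (v.val = 2 * i + 1 ∨ v.val + 1 = 2 * i ∨
              (2 * i + 1 = n ∧ v.val = 0))) ∨
            ((u.val = 2 * i + 1 ∨ u.val + 1 = 2 * i ∨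
              (2 * i + 1 = n ∧ u.val = 0)) ∧ v.val = 2 * i)) ↔ i = j := by
          by_cases hw : (u.val + 1 = n ∧ v.val = 0) ∨ (v.val + 1 = n ∧ u.val = 0)
          · exact ⟨d, by omega, fun i hi => by omega⟩
          · rcases Nat.even_or_odd' u.val with ⟨c, hc | hc⟩
            · exact ⟨c, by omega, fun i hi => by omega⟩
            · exact ⟨v.val / 2, by omega, fun i hi => by omega⟩
        obtain ⟨j, hj, h⟩ := hj
        exact ⟨⟨j, hj⟩, fun i => by rw [Fin.ext_iff]; exact h i.val i.isLt⟩
      obtain ⟨j, hj⟩ := hj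
      simp [hj, Finset.filter_eq']
    · intro ho
      obtain ⟨i, hi⟩ := Finset.card_pos.1 ho.pos
      simp only [Finset.mem_filter, Finset.mem_univ, true_and] at hi
      simp only [cycleGraph, SimpleGraph.fromRel_adj, succ_mod_eq]
      refine ⟨huv, ?_⟩
      omega

theorem stmt12 (n : ℕ) (hn : 3 ≤ n) (hodd : Odd n) :
    b2 (cycleGraph n) = (n + 1) / 2 := by
  refine le_antisymm (Nat.sInf_le (upper hn hodd)) ?_
  refine le_csInf ⟨_, upper hn hodd⟩ ?_
  rintro k ⟨B, hB⟩
  have := lower hn hodd hB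
  omega
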